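/- Let b be a positive integer, C₁, C₂, C₃ ≥ 1 real numbers, and let θ : ℤ₊ → ℝ be non-negative and not identically zero, represented as θ(n) = c·∏_{p^ν ∥ n} A_p(ν) · ∏_{p ∤ n} A_p(0) with c ∈ ℝ and non-negative A_p : ℕ → ℝ (with the convention that an infinite product converges if the partial products of its nonzero factors converge to a nonzero limit, and equals 0 if some factor vanishes), satisfying: (i) for all primes p and all ν ≥ 1, |A_p(ν) − A_p(ν−1)| ≤ C₁ if p^ν | b and |A_p(ν) − A_p(ν−1)| ≤ C₂·p^{−ν} if p^ν ∤ b; and (ii) for all positive integers k, |c·∏_{p ∤ k} A_p(0)| ≤ C₃. Then for every positive integer q, the infinite sum ∑_{n > 0, gcd(n,q)=1} (θ∗μ)(n)/n and the infinite product c·∏_{p ∤ q} [ (1 − 1/p)·∑_{ν=0}^∞ A_p(ν)/p^ν ] · ∏_{p | q} A_p(0) both converge, and they converge to the same real number. -/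

import Mathlib

/-!
Put `D_p(0) = A_p(0)` and `D_p(ν) = (A_p(ν) - A_p(ν - 1)) / p^ν` for `ν ≥ 1`. Summing the Möbius
function over squarefree divisors gives `(θ ∗ μ)(n) / n = c ∏_p D_p(ν_p)` for `p^{ν_p} ∥ n`, and
summation by parts gives `∑_ν D_p(ν) = (1 - 1/p) ∑_ν A_p(ν) / p^ν`. So the theorem distributes an
infinite product over infinite sums, `∏_p ∑_ν D_p(ν) = ∑_ν ∏_p D_p(ν_p)`, the sum on the right being
over the finitely supported families `ν` of exponents.

The constant terms `D_p(0)` are not `1` and may vanish, so this is not an Euler product. It is the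
dominated limit of the distributive laws for finite sets of primes. Since `θ` is not identically
zero, `∏_p A_p(0)` has a nonzero limit after the removal of finitely many primes, and therefore all
finite products of the `D_p(0)` are bounded by one constant `C`. Then `C ∏_{ν_p ≠ 0} |D_p(ν_p)|`
dominates, and it is summable because `∑_p ∑_{ν ≥ 1} |D_p(ν)|` converges.
-/

open scoped Classical

/-- The Dirichlet convolution `θ ∗ μ` of a real-valued arithmetic function with the Möbius
function. -/
noncomputable def dconv (θ : ℕ → ℝ) (n : ℕ) : ℝ :=
  ∑ d ∈ n.divisors, (ArithmeticFunction.moebius d : ℝ) * θ (n / d)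

/-- `θ` is represented by the constant `c` and the local data `A` in the sense that
`θ(n) = c · ∏_{p^ν ∥ n} A_p(ν) · ∏_{p ∤ n} A_p(0)`, the infinite product over the primes not
dividing `n` being convergent. -/
def EulerRep (θ : ℕ → ℝ) (c : ℝ) (A : ℕ → ℕ → ℝ) : Prop :=
  (∀ p ν : ℕ, p.Prime → 0 ≤ A p ν) ∧
  (∀ n : ℕ, 0 < n → Multipliable (fun p : {p : ℕ // p.Prime ∧ ¬ p ∣ n} => A p.1 0)) ∧
  (∀ n : ℕ, 0 < n →
    θ n = c * (∏ p ∈ n.primeFactors, A p (n.factorization p)) *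
      ∏' p : {p : ℕ // p.Prime ∧ ¬ p ∣ n}, A p.1 0)

/-- The local data `c, A` satisfies the smallness conditions of the set `Θ₂(b, C₁, C₂, C₃)`. -/
def SmallCond (b : ℕ) (C₁ C₂ C₃ c : ℝ) (A : ℕ → ℕ → ℝ) : Prop :=
  (∀ p ν : ℕ, p.Prime → 1 ≤ ν →
    (p ^ ν ∣ b → |A p ν - A p (ν - 1)| ≤ C₁) ∧
    (¬ p ^ ν ∣ b → |A p ν - A p (ν - 1)| ≤ C₂ / (p : ℝ) ^ ν)) ∧
  (∀ k : ℕ, 0 < k → |c * ∏' p : {p : ℕ // p.Prime ∧ ¬ p ∣ k}, A p.1 0| ≤ C₃)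

section InfiniteDistributivity

open Filter Topology

variable {ι : Type*}

theorem summable_finsupp_prod_of_nonneg {M : Type*} [Zero M] {g : ι × M → ℝ}
    (hg : Summable g) (hg0 : ∀ x, 0 ≤ g x) :
    Summable fun ν : ι →₀ M => ν.prod fun i m => g (i, m) := by
  -- A family is determined by its graph, so this is part of the expansion of `∏ x, (1 + g x)`.
  have hgraph (ν : ι →₀ M) : ∏ x ∈ ν.graph, g x = ν.prod fun i m => g (i, m) :=
    Finset.prod_map ..
  simpa only [Function.comp_def, hgraph] using
    (summable_finsetProd_of_summable_nonneg hg0 hg).comp_injective (Finsupp.graph_injective ι M)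

theorem summable_finsupp_prod_of_succ {g : ι → ℕ → ℝ}
    (hg : Summable fun x : ι × ℕ => g x.1 (x.2 + 1)) (hg0 : ∀ i k, 0 ≤ g i k) :
    Summable fun ν : ι →₀ ℕ => ν.prod g := by
  let g' (x : ι × ℕ) : ℝ := if x.2 = 0 then 0 else g x.1 x.2
  have hinj : (Prod.map id Nat.succ : ι × ℕ → ι × ℕ).Injective :=
    Function.injective_id.prodMap Nat.succ_injective
  have hg' : Summable g' := by
    refine (hinj.summable_iff ?_).mp hg
    rintro ⟨i, _ | k⟩ hx
    · rfl
    · exact (hx ⟨(i, k), rfl⟩).elim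
  have hprod (ν : ι →₀ ℕ) : (ν.prod fun i k => g' (i, k)) = ν.prod g :=
    Finset.prod_congr rfl fun i hi => if_neg (Finsupp.mem_support_iff.mp hi)
  simpa only [hprod] using summable_finsupp_prod_of_nonneg hg' fun x => by
    dsimp only [g']; split_ifs; exacts [le_rfl, hg0 _ _]

variable {R : Type*} [NormedCommRing R]

theorem norm_prod_le_mul_finsupp_prod [NormOneClass R] {a : ι → ℕ → R} {C : ℝ}
    (hC : ∀ S : Finset ι, ‖∏ i ∈ S, a i 0‖ ≤ C) {S : Finset ι} {ν : ι →₀ ℕ}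
    (hν : ν.support ⊆ S) : ‖∏ i ∈ S, a i (ν i)‖ ≤ C * ν.prod fun i k => ‖a i k‖ := by
  have hzero : ∏ i ∈ S \ ν.support, a i (ν i) = ∏ i ∈ S \ ν.support, a i 0 :=
    Finset.prod_congr rfl fun i hi => by
      rw [Finsupp.notMem_support_iff.mp (Finset.mem_sdiff.mp hi).2]
  rw [← Finset.prod_sdiff hν, hzero]
  exact (norm_mul_le _ _).trans <| mul_le_mul (hC _) (Finset.norm_prod_le _ _) (norm_nonneg _)
    ((norm_nonneg _).trans (hC ∅))

variable [CompleteSpace R]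

theorem summable_norm_and_hasSum_prod_fin {β : Type*} {n : ℕ} {f : Fin n → β → R}
    (hf : ∀ i, Summable fun x => ‖f i x‖) :
    (Summable fun ν : Fin n → β => ‖∏ i, f i (ν i)‖) ∧
      HasSum (fun ν : Fin n → β => ∏ i, f i (ν i)) (∏ i, ∑' x, f i x) := by
  induction n with
  | zero => exact ⟨Summable.of_finite, by simp⟩
  | succ n ih =>
    obtain ⟨hnorm, hsum⟩ := ih fun i => hf i.succ
    rw [← (Fin.consEquiv fun _ => β).summable_iff, ← (Fin.consEquiv fun _ => β).hasSum_iff,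
      Fin.prod_univ_succ]
    simp only [Function.comp_def, Fin.consEquiv_apply, Fin.prod_univ_succ, Fin.cons_zero,
      Fin.cons_succ]
    have hprod := (summable_mul_of_summable_norm (hf 0) hnorm).hasSum
    rw [← tsum_mul_tsum_of_summable_norm (hf 0) hnorm, hsum.tsum_eq] at hprod
    have hprod_norm := (hf 0).mul_norm hnorm
    exact ⟨hprod_norm, hprod⟩

theorem hasSum_prod_pi {κ β : Type*} [Fintype κ] {f : κ → β → R}
    (hf : ∀ i, Summable fun x => ‖f i x‖) :
    HasSum (fun ν : κ → β => ∏ i, f i (ν i)) (∏ i, ∑' x, f i x) := by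
  let e := Fintype.equivFin κ
  rw [← (e.arrowCongr (.refl β)).symm.hasSum_iff, ← e.symm.prod_comp]
  convert (summable_norm_and_hasSum_prod_fin fun i => hf (e.symm i)).2 using 2 with ν
  simp [← e.symm.prod_comp]

theorem hasSum_indicator_support_subset {a : ι → ℕ → R} {S : Finset ι}
    (ha : ∀ i ∈ S, Summable fun k => ‖a i k‖) :
    HasSum ({ν : ι →₀ ℕ | ↑ν.support ⊆ (S : Set ι)}.indicator fun ν => ∏ i ∈ S, a i (ν i))
      (∏ i ∈ S, ∑' k, a i k) := by
  let e : {ν : ι →₀ ℕ | ↑ν.support ⊆ (S : Set ι)} ≃ (S → ℕ) :=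
    (Finsupp.restrictSupportEquiv (S : Set ι) ℕ).trans Finsupp.equivFunOnFinite
  rw [← hasSum_subtype_iff_indicator, ← S.prod_coe_sort, ← e.symm.hasSum_iff]
  convert hasSum_prod_pi fun i : S => ha i i.2 using 2 with ν
  rw [Function.comp_apply, Function.comp_apply, ← S.prod_coe_sort]
  exact Fintype.prod_congr _ _ fun i => congrArg (a i) (congrFun (e.apply_symm_apply ν) i)

theorem summable_and_hasProd_tsum [NormOneClass R] {a : ι → ℕ → R} {C : ℝ} {F : (ι →₀ ℕ) → R}
    (ha : Summable fun x : ι × ℕ => ‖a x.1 (x.2 + 1)‖)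
    (hC : ∀ S : Finset ι, ‖∏ i ∈ S, a i 0‖ ≤ C)
    (hF : ∀ ν : ι →₀ ℕ, HasProd (fun i => a i (ν i)) (F ν)) :
    Summable F ∧ HasProd (fun i => ∑' k, a i k) (∑' ν, F ν) := by
  let bound (ν : ι →₀ ℕ) : ℝ := C * ν.prod fun i k => ‖a i k‖
  let truncated (S : Finset ι) : (ι →₀ ℕ) → R :=
    {ν | ↑ν.support ⊆ (S : Set ι)}.indicator fun ν => ∏ i ∈ S, a i (ν i)
  have hbound : Summable bound :=
    (summable_finsupp_prod_of_succ ha fun _ _ => norm_nonneg _).mul_left C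
  have hsum (S : Finset ι) : ∑' ν, truncated S ν = ∏ i ∈ S, ∑' k, a i k :=
    (hasSum_indicator_support_subset fun i _ =>
      (summable_nat_add_iff 1).mp (ha.prod_factor i)).tsum_eq
  have hle (S : Finset ι) (ν : ι →₀ ℕ) : ‖truncated S ν‖ ≤ bound ν := by
    by_cases hν : ν.support ⊆ S
    · have := norm_prod_le_mul_finsupp_prod hC hν
      simpa [truncated, hν]
    · have hC0 : 0 ≤ C := (norm_nonneg _).trans (hC ∅)
      have : 0 ≤ bound ν := mul_nonneg hC0 (Finset.prod_nonneg fun _ _ => norm_nonneg _)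
      simpa [truncated, hν]
  have hlim (ν : ι →₀ ℕ) : Tendsto (truncated · ν) atTop (𝓝 (F ν)) := by
    refine (hF ν).congr' ?_
    filter_upwards [eventually_ge_atTop ν.support] with S hS
    simp [truncated, show ν.support ⊆ S from hS]
  refine ⟨hbound.of_norm_bounded fun ν => le_of_tendsto' (hlim ν).norm (hle · ν), ?_⟩
  have hprod := tendsto_tsum_of_dominated_convergence hbound hlim (.of_forall hle)
  simp only [hsum] at hprod
  exact hprod

end InfiniteDistributivity

section NonzeroProducts

open Filter Topology

variable {𝕜 ι : Type*} [NormedField 𝕜]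

theorem summable_abs_log_norm_of_hasProd {g : ι → 𝕜} {x : 𝕜} (h : HasProd g x) (hx : x ≠ 0) :
    Summable fun i => |Real.log ‖g i‖| := by
  have hg (i : ι) : ‖g i‖ ≠ 0 := fun hi =>
    hx (h.unique (hasProd_zero_of_exists_eq_zero ⟨i, norm_eq_zero.mp hi⟩))
  have hlog : HasSum (fun i => Real.log ‖g i‖) (Real.log ‖x‖) := by
    refine (h.norm.log (norm_ne_zero_iff.mpr hx)).congr fun S => ?_
    exact Real.log_prod fun i _ => hg i
  exact hlog.summable.abs

theorem summable_posLog_norm_of_hasProd {g : ι → 𝕜} {x : 𝕜} (h : HasProd g x) (hx : x ≠ 0) :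
    Summable fun i => Real.posLog ‖g i‖ :=
  (summable_abs_log_norm_of_hasProd h hx).of_nonneg_of_le (fun _ => Real.posLog_nonneg)
    fun _ => max_le (abs_nonneg _) (le_abs_self _)

theorem exists_norm_finsetProd_le_of_hasProd {s t : Set ι} (hst : (t \ s).Finite) {g : ι → 𝕜}
    {x : 𝕜} (h : HasProd (fun i : s => g i) x) (hx : x ≠ 0) :
    ∃ C, ∀ S : Finset t, ‖∏ i ∈ S, g i‖ ≤ C := by
  -- The positive parts of the logarithms stay summable on `t`, even where `g` vanishes.
  have hs : Summable (s.indicator fun i => Real.posLog ‖g i‖) :=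
    summable_subtype_iff_indicator.mp (summable_posLog_norm_of_hasProd h hx)
  have ht : Summable (t.indicator fun i => Real.posLog ‖g i‖) := by
    refine hs.of_norm_bounded_eventually ?_
    filter_upwards [hst.compl_mem_cofinite] with i hi
    by_cases hit : i ∈ t
    · have his : i ∈ s := by_contra fun his => hi ⟨hit, his⟩
      simp [hit, his, abs_of_nonneg Real.posLog_nonneg]
    · simp [hit, Set.indicator_nonneg, Real.posLog_nonneg]
  refine ⟨Real.exp (∑' i : t, Real.posLog ‖g i‖), fun S => ?_⟩
  calc ‖∏ i ∈ S, g i‖ ≤ Real.exp (Real.log ‖∏ i ∈ S, g i‖) := Real.le_exp_log _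
    _ ≤ Real.exp (Real.posLog ‖∏ i ∈ S, g i‖) := Real.exp_le_exp.mpr (le_max_right _ _)
    _ ≤ Real.exp (∑ i ∈ S, Real.posLog ‖g i‖) := by
      rw [norm_prod]
      exact Real.exp_le_exp.mpr (Real.posLog_prod S fun i => ‖g i‖)
    _ ≤ Real.exp (∑' i : t, Real.posLog ‖g i‖) :=
      Real.exp_le_exp.mpr ((summable_subtype_iff_indicator.mpr ht).sum_le_tsum S
        fun _ _ => Real.posLog_nonneg)

end NonzeroProducts

section PrimesNotDvd

/-- The primes not dividing `n`, which index the products over `p ∤ n`. This is an abbreviation, so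
that its coercion to a type unfolds to the subtype in `EulerRep`. -/
abbrev primesNotDvd (n : ℕ) : Set ℕ := {p | p.Prime ∧ ¬ p ∣ n}

theorem primesNotDvd_eq_union_of_dvd {k m : ℕ} (hm : 0 < m) (hkm : k ∣ m) :
    primesNotDvd k = ↑(m.primeFactors \ k.primeFactors) ∪ primesNotDvd m := by
  ext p
  have hk : k ≠ 0 := ne_zero_of_dvd_ne_zero hm.ne' hkm
  have hdvd : p ∣ k → p ∣ m := fun h => h.trans hkm
  simp only [Finset.coe_sdiff, Set.mem_union, Set.mem_sdiff, Set.mem_ofPred_eq, Finset.mem_coe,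
    Nat.mem_primeFactors_of_ne_zero hk, Nat.mem_primeFactors_of_ne_zero hm.ne']
  tauto

theorem hasProd_primesNotDvd_of_dvd {M : Type*} [CommMonoid M] [TopologicalSpace M]
    [ContinuousMul M] (g : ℕ → M) {k m : ℕ} (hm : 0 < m) (hkm : k ∣ m) {x : M}
    (h : HasProd (fun p : primesNotDvd m => g p) x) :
    HasProd (fun p : primesNotDvd k => g p) ((∏ p ∈ m.primeFactors \ k.primeFactors, g p) * x) := by
  have hdisj : Disjoint (↑(m.primeFactors \ k.primeFactors) : Set ℕ) (primesNotDvd m) :=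
    Set.disjoint_left.mpr fun p hp hpm =>
      hpm.2 (Nat.dvd_of_mem_primeFactors (Finset.mem_sdiff.mp hp).1)
  rw [primesNotDvd_eq_union_of_dvd hm hkm]
  exact (Finset.hasProd (m.primeFactors \ k.primeFactors) g).mul_disjoint hdisj h

/-- The exponents of the prime factorization parametrize the positive integers coprime to `q`. -/
noncomputable def coprimeFactorizationEquiv (q : ℕ) :
    {n : ℕ // 0 < n ∧ n.gcd q = 1} ≃ (primesNotDvd q →₀ ℕ) :=
  Equiv.trans
    { toFun n := ⟨n.1.factorization, fun _ hp => ⟨Nat.prime_of_mem_primeFactors hp,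
        (Nat.prime_of_mem_primeFactors hp).coprime_iff_not_dvd.mp
          (Nat.Coprime.coprime_dvd_left (Nat.dvd_of_mem_primeFactors hp) n.2.2)⟩⟩
      invFun ν := ⟨ν.1.prod (· ^ ·), Nat.prod_pow_pos_of_zero_notMem_support
          fun h0 => Nat.not_prime_zero (ν.2 h0).1,
        Nat.Coprime.prod_left fun _ hp =>
          ((ν.2 hp).1.coprime_iff_not_dvd.mpr (ν.2 hp).2).pow_left _⟩
      left_inv n := Subtype.ext (Nat.prod_factorization_pow_eq_self n.2.1.ne')
      right_inv ν := Subtype.ext (Nat.prod_pow_factorization_eq_self fun _ hp => (ν.2 hp).1) }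
    (Finsupp.restrictSupportEquiv (primesNotDvd q) ℕ)

theorem coprimeFactorizationEquiv_apply {q : ℕ} (n : {n : ℕ // 0 < n ∧ n.gcd q = 1})
    (p : primesNotDvd q) : coprimeFactorizationEquiv q n p = n.1.factorization p :=
  rfl

end PrimesNotDvd

section SummationByParts

/-- The terms of the power series `(1 - r) * ∑ ν, a ν * r ^ ν` after summation by parts. For
`a = A p` and `r = p⁻¹` they are the local factors of `(θ ∗ μ)(n) / n`. -/
def differenceTerm {R : Type*} [Ring R] (a : ℕ → R) (r : R) : ℕ → R
  | 0 => a 0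
  | ν + 1 => (a (ν + 1) - a ν) * r ^ (ν + 1)

theorem sum_range_differenceTerm_mul_pow {R : Type*} [Ring R] (a : ℕ → R) (r : R) (n : ℕ) :
    ∑ k ∈ Finset.range (n + 1), differenceTerm a r k * r ^ (n - k) = a n * r ^ n := by
  induction n with
  | zero => simp [differenceTerm]
  | succ n ih =>
    have hshift : ∑ k ∈ Finset.range (n + 1), differenceTerm a r k * r ^ (n + 1 - k) =
        a n * r ^ (n + 1) := by
      rw [pow_succ, ← mul_assoc, ← ih, Finset.sum_mul]
      refine Finset.sum_congr rfl fun k hk => ?_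
      rw [Nat.sub_add_comm (Finset.mem_range_succ_iff.mp hk), pow_succ, mul_assoc]
    rw [Finset.sum_range_succ, hshift, Nat.sub_self, pow_zero, mul_one, differenceTerm, sub_mul,
      add_sub_cancel]

theorem hasSum_mul_pow_of_summable_norm_differenceTerm {R : Type*} [NormedRing R]
    [CompleteSpace R] {a : ℕ → R} {r : R} (hr : ‖r‖ < 1)
    (ha : Summable fun k => ‖differenceTerm a r k‖) :
    HasSum (fun k => a k * r ^ k) ((∑' k, differenceTerm a r k) * ∑' k, r ^ k) := by
  simpa only [sum_range_differenceTerm_mul_pow] using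
    hasSum_sum_range_mul_of_summable_norm ha (summable_norm_geometric_of_norm_lt_one hr)

end SummationByParts

section Moebius

open ArithmeticFunction

theorem moebius_prod_of_subset_primeFactors {n : ℕ} {t : Finset ℕ} (ht : t ⊆ n.primeFactors) :
    moebius (∏ p ∈ t, p) = (-1) ^ t.card := by
  rw [isMultiplicative_moebius.map_prod_of_subset_primeFactors n t ht, ← Finset.prod_const]
  exact Finset.prod_congr rfl fun p hp =>
    moebius_apply_prime (Nat.prime_of_mem_primeFactors (ht hp))

theorem sum_divisors_moebius_mul {R : Type*} [Ring R] {n : ℕ} (hn : n ≠ 0) (f : ℕ → R) :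
    ∑ d ∈ n.divisors, (moebius d : R) * f d =
      ∑ t ∈ n.primeFactors.powerset, (-1) ^ t.card * f (∏ p ∈ t, p) := by
  have hfactors : (UniqueFactorizationMonoid.normalizedFactors n).toFinset = n.primeFactors := by
    rw [Nat.factors_eq]
    rfl
  have hsquarefree (d : ℕ) (_ : d ∈ n.divisors) (hd : (moebius d : R) * f d ≠ 0) :
      Squarefree d := by
    by_contra hsq
    simp [moebius_eq_zero_of_not_squarefree hsq] at hd
  rw [← Finset.sum_filter_of_ne hsquarefree, Nat.sum_divisors_filter_squarefree hn, hfactors]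
  refine Finset.sum_congr rfl fun t ht => ?_
  have hprod : t.val.prod = ∏ p ∈ t, p := Finset.prod_val t
  rw [hprod, moebius_prod_of_subset_primeFactors (Finset.mem_powerset.mp ht)]
  push_cast
  rfl

theorem factorization_div_prod_of_subset_primeFactors {n : ℕ} {t : Finset ℕ}
    (ht : t ⊆ n.primeFactors) (p : ℕ) :
    (n / ∏ q ∈ t, q).factorization p = n.factorization p - if p ∈ t then 1 else 0 := by
  have hprime (q : ℕ) (hq : q ∈ t) : q.Prime := Nat.prime_of_mem_primeFactors (ht hq)
  have hdvd : ∏ q ∈ t, q ∣ n :=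
    (Finset.prod_dvd_prod_of_subset _ _ _ ht).trans (Nat.prod_primeFactors_dvd n)
  have hindicator : (∏ q ∈ t, q).factorization p = if p ∈ t then 1 else 0 := by
    rw [Nat.factorization_prod fun q hq => (hprime q hq).ne_zero, Finsupp.finsetSum_apply,
      Finset.sum_congr rfl fun q hq => by rw [(hprime q hq).factorization, Finsupp.single_apply]]
    simp
  rw [Nat.factorization_div hdvd, Finsupp.tsub_apply, hindicator]

theorem sum_divisors_moebius_mul_prod {R : Type*} [CommRing R] {n : ℕ} (hn : n ≠ 0)
    (a : ℕ → ℕ → R) :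
    ∑ d ∈ n.divisors, (moebius d : R) * ∏ p ∈ n.primeFactors, a p ((n / d).factorization p) =
      ∏ p ∈ n.primeFactors, (a p (n.factorization p) - a p (n.factorization p - 1)) := by
  rw [sum_divisors_moebius_mul hn, Finset.prod_sub]
  refine Finset.sum_congr rfl fun t ht => ?_
  have ht := Finset.mem_powerset.mp ht
  rw [mul_assoc, ← Finset.prod_sdiff ht]
  congr 2 <;> refine Finset.prod_congr rfl fun p hp => ?_
  · rw [factorization_div_prod_of_subset_primeFactors ht, if_neg (Finset.mem_sdiff.mp hp).2,
      Nat.sub_zero]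
  · rw [factorization_div_prod_of_subset_primeFactors ht, if_pos hp]

end Moebius

section EulerRepresentation

theorem prod_primeFactors_differenceTerm {𝕜 : Type*} [Field 𝕜] {n : ℕ} (hn : n ≠ 0)
    (A : ℕ → ℕ → 𝕜) :
    ∏ p ∈ n.primeFactors, differenceTerm (A p) (p : 𝕜)⁻¹ (n.factorization p) =
      (∏ p ∈ n.primeFactors, (A p (n.factorization p) - A p (n.factorization p - 1))) / n := by
  have hterm (p : ℕ) (hp : p ∈ n.primeFactors) :
      differenceTerm (A p) (p : 𝕜)⁻¹ (n.factorization p) =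
        (A p (n.factorization p) - A p (n.factorization p - 1)) /
          (p : 𝕜) ^ n.factorization p := by
    obtain ⟨k, hk⟩ := Nat.exists_eq_succ_of_ne_zero (Finsupp.mem_support_iff.mp
      (Nat.support_factorization n ▸ hp))
    rw [hk, differenceTerm, inv_pow, Nat.succ_sub_one, div_eq_mul_inv]
  have hn_prod : (∏ p ∈ n.primeFactors, (p : 𝕜) ^ n.factorization p) = n := by
    exact_mod_cast congrArg (Nat.cast (R := 𝕜)) (Nat.prod_factorization_pow_eq_self hn)
  rw [Finset.prod_congr rfl hterm, Finset.prod_div_distrib, hn_prod]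

variable {𝕜 : Type*} [NormedField 𝕜]

/-- The representation `θ(n) = c · ∏_{p^ν ∥ n} A_p(ν) · ∏_{p ∤ n} A_p(0)` of `EulerRep`, with values
in a normed field and without sign conditions. -/
structure HasEulerRep (θ : ℕ → 𝕜) (c : 𝕜) (A : ℕ → ℕ → 𝕜) : Prop where
  multipliable : ∀ n : ℕ, 0 < n → Multipliable fun p : primesNotDvd n => A p 0
  apply_eq : ∀ n : ℕ, 0 < n → θ n = c * (∏ p ∈ n.primeFactors, A p (n.factorization p)) *
    ∏' p : primesNotDvd n, A p 0

variable {θ : ℕ → 𝕜} {c : 𝕜} {A : ℕ → ℕ → 𝕜}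

theorem HasEulerRep.apply_of_dvd (h : HasEulerRep θ c A) {d n : ℕ} (hn : 0 < n)
    (hdn : d ∣ n) :
    θ d = c * (∏ p ∈ n.primeFactors, A p (d.factorization p)) *
      ∏' p : primesNotDvd n, A p 0 := by
  have hzero : ∏ p ∈ n.primeFactors \ d.primeFactors, A p 0 =
      ∏ p ∈ n.primeFactors \ d.primeFactors, A p (d.factorization p) :=
    Finset.prod_congr rfl fun p hp => by
      rw [Finsupp.notMem_support_iff.mp (Finset.mem_sdiff.mp hp).2]
  rw [h.apply_eq d (Nat.pos_of_dvd_of_pos hdn hn),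
    (hasProd_primesNotDvd_of_dvd (A · 0) hn hdn (h.multipliable n hn).hasProd).tprod_eq, hzero,
    ← Finset.prod_sdiff (Nat.primeFactors_mono hdn hn.ne')]
  ring

theorem HasEulerRep.hasProd_differenceTerm (h : HasEulerRep θ c A) {n q : ℕ} (hn : 0 < n)
    (hq : 0 < q) (hnq : n.Coprime q) :
    HasProd (fun p : primesNotDvd q => differenceTerm (A p) (p : 𝕜)⁻¹ (n.factorization p))
      ((∏ p ∈ n.primeFactors, differenceTerm (A p) (p : 𝕜)⁻¹ (n.factorization p)) *
        ∏' p : primesNotDvd (n * q), A p 0) := by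
  have hpos : 0 < n * q := Nat.mul_pos hn hq
  have hzero (p : primesNotDvd (n * q)) :
      differenceTerm (A p) (p : 𝕜)⁻¹ (n.factorization p) = A p 0 := by
    rw [Nat.factorization_eq_zero_of_not_dvd fun hp => p.2.2 (hp.mul_right q), differenceTerm]
  have hsdiff : (n * q).primeFactors \ q.primeFactors = n.primeFactors := by
    rw [hnq.primeFactors_mul, Finset.union_sdiff_cancel_right hnq.disjoint_primeFactors]
  rw [← hsdiff]
  refine hasProd_primesNotDvd_of_dvd
    (fun p => differenceTerm (A p) (p : 𝕜)⁻¹ (n.factorization p)) hpos (q.dvd_mul_left n) ?_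
  simpa only [hzero] using (h.multipliable (n * q) hpos).hasProd

theorem HasEulerRep.sum_divisors_moebius_mul_div (h : HasEulerRep θ c A) {n q : ℕ} (hn : 0 < n)
    (hq : 0 < q) (hnq : n.Coprime q) :
    (∑ d ∈ n.divisors, (ArithmeticFunction.moebius d : 𝕜) * θ (n / d)) / n =
      c * (∏' p : primesNotDvd q, differenceTerm (A p) (p : 𝕜)⁻¹ (n.factorization p)) *
        ∏ p ∈ q.primeFactors, A p 0 := by
  have hpos : 0 < n * q := Nat.mul_pos hn hq
  have hsdiff : (n * q).primeFactors \ n.primeFactors = q.primeFactors := by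
    rw [hnq.primeFactors_mul, Finset.union_sdiff_cancel_left hnq.disjoint_primeFactors]
  have haway : ∏' p : primesNotDvd n, A p 0 =
      (∏ p ∈ q.primeFactors, A p 0) * ∏' p : primesNotDvd (n * q), A p 0 := by
    rw [← hsdiff]
    exact (hasProd_primesNotDvd_of_dvd (A · 0) hpos (n.dvd_mul_right q)
      (h.multipliable _ hpos).hasProd).tprod_eq
  have hterm (d : ℕ) (hd : d ∈ n.divisors) :
      (ArithmeticFunction.moebius d : 𝕜) * θ (n / d) =
        (c * ∏' p : primesNotDvd n, A p 0) * ((ArithmeticFunction.moebius d : 𝕜) *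
          ∏ p ∈ n.primeFactors, A p ((n / d).factorization p)) := by
    rw [h.apply_of_dvd hn (Nat.div_dvd_of_dvd (Nat.dvd_of_mem_divisors hd))]
    ring
  rw [Finset.sum_congr rfl hterm, ← Finset.mul_sum, sum_divisors_moebius_mul_prod hn.ne',
    (h.hasProd_differenceTerm hn hq hnq).tprod_eq,
    prod_primeFactors_differenceTerm hn.ne', haway]
  ring

theorem HasEulerRep.exists_norm_finsetProd_le (h : HasEulerRep θ c A) {n : ℕ} (hn : 0 < n)
    (hθn : θ n ≠ 0) (q : ℕ) :
    ∃ C, ∀ S : Finset (primesNotDvd q), ‖∏ p ∈ S, A p 0‖ ≤ C := by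
  have hfinite : (primesNotDvd q \ primesNotDvd n).Finite :=
    n.primeFactors.finite_toSet.subset fun p hp => Nat.mem_primeFactors.mpr
      ⟨hp.1.1, not_not.mp fun hpn => hp.2 ⟨hp.1.1, hpn⟩, hn.ne'⟩
  have haway : ∏' p : primesNotDvd n, A p 0 ≠ 0 :=
    right_ne_zero_of_mul (h.apply_eq n hn ▸ hθn)
  exact exists_norm_finsetProd_le_of_hasProd (g := (A · 0)) hfinite
    (h.multipliable n hn).hasProd haway

theorem HasEulerRep.multipliable_and_hasSum [CompleteSpace 𝕜] (h : HasEulerRep θ c A)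
    (hne : ∃ n : ℕ, 0 < n ∧ θ n ≠ 0) {q : ℕ} (hq : 0 < q)
    (hA : Summable fun x : primesNotDvd q × ℕ =>
      ‖differenceTerm (A x.1) ((x.1 : ℕ) : 𝕜)⁻¹ (x.2 + 1)‖) :
    Multipliable (fun p : primesNotDvd q => ∑' k, differenceTerm (A p) (p : 𝕜)⁻¹ k) ∧
    HasSum ({n : ℕ | 0 < n ∧ n.gcd q = 1}.indicator fun n =>
        (∑ d ∈ n.divisors, (ArithmeticFunction.moebius d : 𝕜) * θ (n / d)) / n)
      (c * (∏' p : primesNotDvd q, ∑' k, differenceTerm (A p) (p : 𝕜)⁻¹ k) *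
        ∏ p ∈ q.primeFactors, A p 0) := by
  obtain ⟨n₀, hn₀, hθn₀⟩ := hne
  obtain ⟨C, hC⟩ := h.exists_norm_finsetProd_le hn₀ hθn₀ q
  let e := coprimeFactorizationEquiv q
  let D (p : primesNotDvd q) (k : ℕ) : 𝕜 := differenceTerm (A p) (p : 𝕜)⁻¹ k
  have hmult (ν : primesNotDvd q →₀ ℕ) : Multipliable fun p => D p (ν p) := by
    obtain ⟨n, rfl⟩ := e.surjective ν
    exact (h.hasProd_differenceTerm n.2.1 hq n.2.2).multipliable
  obtain ⟨hsummable, hprod⟩ := summable_and_hasProd_tsum (a := D) hA hC fun ν => (hmult ν).hasProd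
  refine ⟨hprod.multipliable, ?_⟩
  rw [hprod.tprod_eq, ← hasSum_subtype_iff_indicator]
  refine ((e.hasSum_iff.mpr hsummable.hasSum).mul_left c |>.mul_right _).congr_fun fun n => ?_
  exact h.sum_divisors_moebius_mul_div n.2.1 hq n.2.2

end EulerRepresentation

section GeneralTheorem

theorem norm_inv_natCast_prime_lt_one {𝕜 : Type*} [RCLike 𝕜] {p : ℕ} (hp : p.Prime) :
    ‖(p : 𝕜)⁻¹‖ < 1 := by
  rw [norm_inv, RCLike.norm_natCast]
  exact inv_lt_one_of_one_lt₀ (mod_cast hp.one_lt)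

variable {𝕜 : Type*} [RCLike 𝕜] {A : ℕ → ℕ → 𝕜}

theorem summable_norm_differenceTerm_succ
    (hA : Summable fun x : Nat.Primes × ℕ =>
      ‖A x.1 (x.2 + 1) - A x.1 x.2‖ / (x.1 : ℝ) ^ (x.2 + 1)) (q : ℕ) :
    Summable fun x : primesNotDvd q × ℕ =>
      ‖differenceTerm (A x.1) ((x.1 : ℕ) : 𝕜)⁻¹ (x.2 + 1)‖ := by
  have hinj : (fun p : primesNotDvd q => (⟨p, p.2.1⟩ : Nat.Primes)).Injective :=
    fun _ _ h => Subtype.ext (Subtype.mk.inj h)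
  have hterm (x : primesNotDvd q × ℕ) :
      ‖differenceTerm (A x.1) ((x.1 : ℕ) : 𝕜)⁻¹ (x.2 + 1)‖ =
        ‖A x.1 (x.2 + 1) - A x.1 x.2‖ / (x.1 : ℝ) ^ (x.2 + 1) := by
    rw [differenceTerm, norm_mul, norm_pow, norm_inv, RCLike.norm_natCast, inv_pow, div_eq_mul_inv]
  simp only [hterm]
  exact (hA.comp_injective (hinj.prodMap Function.injective_id) :)

theorem hasSum_div_pow_of_summable_norm_differenceTerm {a : ℕ → 𝕜} {p : ℕ} (hp : p.Prime)
    (ha : Summable fun k => ‖differenceTerm a (p : 𝕜)⁻¹ k‖) :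
    Summable (fun ν => a ν / (p : 𝕜) ^ ν) ∧
      (1 - 1 / (p : 𝕜)) * ∑' ν, a ν / (p : 𝕜) ^ ν = ∑' k, differenceTerm a (p : 𝕜)⁻¹ k := by
  have hr := norm_inv_natCast_prime_lt_one (𝕜 := 𝕜) hp
  have hsum := hasSum_mul_pow_of_summable_norm_differenceTerm hr ha
  simp only [inv_pow, ← div_eq_mul_inv] at hsum
  refine ⟨hsum.summable, ?_⟩
  rw [hsum.tsum_eq, one_div, mul_left_comm]
  simp only [← inv_pow]
  rw [mul_neg_geom_series _ hr, mul_one]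

theorem hasSum_dconv_eq_prod_general {θ : ℕ → 𝕜} {c : 𝕜} (hrep : HasEulerRep θ c A)
    (hne : ∃ n : ℕ, 0 < n ∧ θ n ≠ 0)
    (hA : Summable fun x : Nat.Primes × ℕ =>
      ‖A x.1 (x.2 + 1) - A x.1 x.2‖ / (x.1 : ℝ) ^ (x.2 + 1)) {q : ℕ} (hq : 0 < q) :
    (∀ p : ℕ, p.Prime → ¬ p ∣ q → Summable fun ν : ℕ => A p ν / (p : 𝕜) ^ ν) ∧
    Multipliable (fun p : primesNotDvd q =>
      (1 - 1 / ((p : ℕ) : 𝕜)) * ∑' ν : ℕ, A p ν / ((p : ℕ) : 𝕜) ^ ν) ∧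
    HasSum (fun n : ℕ => if 0 < n ∧ n.gcd q = 1 then
        (∑ d ∈ n.divisors, (ArithmeticFunction.moebius d : 𝕜) * θ (n / d)) / n else 0)
      (c * (∏' p : primesNotDvd q,
          (1 - 1 / ((p : ℕ) : 𝕜)) * ∑' ν : ℕ, A p ν / ((p : ℕ) : 𝕜) ^ ν) *
        ∏ p ∈ q.primeFactors, A p 0) := by
  have hD := summable_norm_differenceTerm_succ hA q
  have hlocal (p : primesNotDvd q) : Summable fun k => ‖differenceTerm (A p) (p : 𝕜)⁻¹ k‖ :=
    (summable_nat_add_iff 1).mp (hD.prod_factor p)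
  obtain ⟨hmult, hsum⟩ := hrep.multipliable_and_hasSum hne hq hD
  have htsum (p : primesNotDvd q) :=
    (hasSum_div_pow_of_summable_norm_differenceTerm p.2.1 (hlocal p)).2
  simp only [htsum]
  refine ⟨fun p hp hpq =>
    (hasSum_div_pow_of_summable_norm_differenceTerm hp (hlocal ⟨p, hp, hpq⟩)).1, hmult, ?_⟩
  exact hsum.congr_fun fun n => by simp only [Set.indicator_apply, Set.mem_ofPred_eq]

end GeneralTheorem

section RealData

theorem EulerRep.hasEulerRep {θ : ℕ → ℝ} {c : ℝ} {A : ℕ → ℕ → ℝ} (h : EulerRep θ c A) :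
    HasEulerRep θ c A :=
  ⟨h.2.1, h.2.2⟩

theorem SmallCond.summable_norm_sub_div_pow {b : ℕ} {C₁ C₂ C₃ c : ℝ} {A : ℕ → ℕ → ℝ}
    (h : SmallCond b C₁ C₂ C₃ c A) (hb : 0 < b) :
    Summable fun x : Nat.Primes × ℕ =>
      ‖A x.1 (x.2 + 1) - A x.1 x.2‖ / (x.1 : ℝ) ^ (x.2 + 1) := by
  -- `bound (p ^ ν)` dominates the `(p, ν)` term, and prime powers determine `p` and `ν ≥ 1`.
  let bound (n : ℕ) : ℝ := if n ∣ b then C₁ / n else C₂ / n ^ 2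
  have hbound : Summable bound := by
    refine ((Real.summable_one_div_nat_pow.mpr one_lt_two).mul_left C₂).congr_cofinite ?_
    filter_upwards [b.divisors.finite_toSet.compl_mem_cofinite] with n hn
    have hnb : ¬ n ∣ b := fun hnb => hn (Nat.mem_divisors.mpr ⟨hnb, hb.ne'⟩)
    simp only [bound, if_neg hnb, mul_one_div]
  have hinj : (fun x : Nat.Primes × ℕ => (x.1 : ℕ) ^ (x.2 + 1)).Injective :=
    Subtype.val_injective.comp Nat.Primes.prodNatEquiv.injective
  refine (hbound.comp_injective hinj).of_nonneg_of_le (fun x => by positivity) fun x => ?_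
  obtain ⟨hdvd, hndvd⟩ := h.1 x.1 (x.2 + 1) x.1.2 (Nat.le_add_left 1 x.2)
  rw [Real.norm_eq_abs]
  dsimp only [Function.comp_apply, bound]
  push_cast
  split_ifs with hxb
  · gcongr
    exact hdvd hxb
  · rw [sq, ← div_div]
    gcongr
    exact hndvd hxb

end RealData

/-- For non-trivial `θ ∈ Θ₂(b, C₁, C₂, C₃)` and any `q ≥ 1`, the sum
`∑_{gcd(n,q)=1} (θ∗μ)(n)/n` and the product
`c ∏_{p ∤ q} [(1 - 1/p) ∑_ν A_p(ν)/p^ν] ∏_{p | q} A_p(0)` both converge, to the same value. -/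
theorem hasSum_dconv_eq_prod (b : ℕ) (C₁ C₂ C₃ : ℝ) (θ : ℕ → ℝ) (c : ℝ) (A : ℕ → ℕ → ℝ)
    (hb : 0 < b) (hC₁ : 1 ≤ C₁) (hC₂ : 1 ≤ C₂) (hC₃ : 1 ≤ C₃)
    (hθ0 : ∀ n : ℕ, 0 ≤ θ n)
    (hne : ∃ n : ℕ, 0 < n ∧ θ n ≠ 0)
    (hrep : EulerRep θ c A)
    (hsmall : SmallCond b C₁ C₂ C₃ c A) :
    ∀ q : ℕ, 0 < q →
      (∀ p : ℕ, p.Prime → ¬ p ∣ q → Summable (fun ν : ℕ => A p ν / (p : ℝ) ^ ν)) ∧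
      Multipliable (fun p : {p : ℕ // p.Prime ∧ ¬ p ∣ q} =>
        (1 - 1 / (p.1 : ℝ)) * ∑' ν : ℕ, A p.1 ν / (p.1 : ℝ) ^ ν) ∧
      HasSum (fun n : ℕ => if 0 < n ∧ Nat.gcd n q = 1 then dconv θ n / n else 0)
        (c * (∏' p : {p : ℕ // p.Prime ∧ ¬ p ∣ q},
            (1 - 1 / (p.1 : ℝ)) * ∑' ν : ℕ, A p.1 ν / (p.1 : ℝ) ^ ν) *
          ∏ p ∈ q.primeFactors, A p 0) :=
  fun _ hq => hasSum_dconv_eq_prod_general hrep.hasEulerRep hne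
    (hsmall.summable_norm_sub_div_pow hb) hq
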